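/- Let I, C : ℕ → ℝ be a Gregory pair, i.e. 0 < I 0 < C 0, I (n+1) = Real.sqrt (C n * I n), C (n+1) = 2 * C n * I (n+1) / (C n + I (n+1)). Then there exists a real number L (the 'termination of the series') such that I converges to L and C converges to L, and moreover I n < L and L < C n for every n. -/

import Mathlib

/-!
One step sends `(i, c)` with `0 < i < c` to `(s, d)`, where `s = √(c i)` is the geometric mean of
`i, c` and `d` is the harmonic mean of `c, s`; hence `i < s < d < c`. So `I` is strictly increasing,
`C` is strictly decreasing and `I n < C n`. Since `d - s = s (c - s) / (c + s) ≤ (c - i) / 2`, the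
gap `C n - I n` tends to zero geometrically, so both sequences converge to the same limit, which lies
strictly between them by strict monotonicity.
-/

/-- One step shrinks the interval strictly at both ends and at least halves its length. -/
lemma gregory_step {i c s d : ℝ} (hi : 0 < i) (hic : i < c) (hs : s = Real.sqrt (c * i))
    (hd : d = 2 * c * s / (c + s)) :
    i < s ∧ s < d ∧ d < c ∧ d - s ≤ (c - i) / 2 := by
  have hc : 0 < c := hi.trans hic
  have his : i < s := by
    rw [hs]
    apply Real.lt_sqrt_of_sq_lt
    nlinarith
  have hsc : s < c := by
    rw [hs, Real.sqrt_lt' hc]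
    nlinarith
  have hs0 : 0 < s := hi.trans his
  have hcs : 0 < c + s := by positivity
  refine ⟨his, ?_, ?_, ?_⟩
  · rw [hd, lt_div_iff₀ hcs]
    nlinarith
  · rw [hd, div_lt_iff₀ hcs]
    nlinarith
  · have : d ≤ (c + s) / 2 := by
      rw [hd, div_le_iff₀ hcs]
      nlinarith [sq_nonneg (c - s)]
    linarith

theorem gregory_pair_termination
    (I C : ℕ → ℝ)
    (h0 : 0 < I 0) (h1 : I 0 < C 0)
    (hI : ∀ n, I (n + 1) = Real.sqrt (C n * I n))
    (hC : ∀ n, C (n + 1) = 2 * C n * I (n + 1) / (C n + I (n + 1))) :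
    ∃ L : ℝ, Filter.Tendsto I Filter.atTop (nhds L) ∧
      Filter.Tendsto C Filter.atTop (nhds L) ∧
      ∀ n, I n < L ∧ L < C n := by
  have hpos : ∀ n, 0 < I n ∧ I n < C n := by
    intro n
    induction n with
    | zero => exact ⟨h0, h1⟩
    | succ k ih =>
      obtain ⟨ha, hb, -, -⟩ := gregory_step ih.1 ih.2 (hI k) (hC k)
      exact ⟨ih.1.trans ha, hb⟩
  have hstep n := gregory_step (hpos n).1 (hpos n).2 (hI n) (hC n)
  have hImono : StrictMono I := strictMono_nat_of_lt_succ fun n => (hstep n).1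
  have hCanti : StrictAnti C := strictAnti_nat_of_succ_lt fun n => (hstep n).2.2.1
  have hgap : ∀ n, C n - I n ≤ (C 0 - I 0) * (1 / 2) ^ n := by
    intro n
    induction n with
    | zero => simp
    | succ k ih =>
      rw [pow_succ]
      linarith [(hstep k).2.2.2]
  have hgap0 : Filter.Tendsto (fun n => C n - I n) Filter.atTop (nhds 0) := by
    refine squeeze_zero (fun n => by linarith [(hpos n).2]) hgap ?_
    simpa using (tendsto_pow_atTop_nhds_zero_of_lt_one (r := (1 / 2 : ℝ))
      (by norm_num) (by norm_num)).const_mul (C 0 - I 0)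
  have hbdd : BddAbove (Set.range I) := by
    refine ⟨C 0, ?_⟩
    rintro _ ⟨n, rfl⟩
    exact (hpos n).2.le.trans (hCanti.antitone (Nat.zero_le n))
  have hIlim := tendsto_atTop_ciSup hImono.monotone hbdd
  have hClim : Filter.Tendsto C Filter.atTop (nhds (⨆ n, I n)) := by
    simpa using hgap0.add hIlim
  exact ⟨⨆ n, I n, hIlim, hClim, fun n =>
    ⟨(hstep n).1.trans_le (hImono.monotone.ge_of_tendsto hIlim (n + 1)),
      (hCanti.antitone.le_of_tendsto hClim (n + 1)).trans_lt (hstep n).2.2.1⟩⟩
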